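/- Let (Ω, 𝔉, μ) be a measure space and let p : Ω → ℝ be measurable with 1 < p⁻ ≤ p(x) ≤ p⁺ < ∞ for all x ∈ Ω, where p⁻, p⁺ are constants, and let p'(x) := p(x)/(p(x) − 1) be the pointwise conjugate exponent. If u, v : Ω → ℝ are measurable with ∫_Ω |u(x)|^{p(x)} dμ(x) < ∞ and ∫_Ω |v(x)|^{p'(x)} dμ(x) < ∞, then the product u·v is μ-integrable and |∫_Ω u(x) v(x) dμ(x)| ≤ 2 ‖u‖_{p(·)} ‖v‖_{p'(·)}. -/

import Mathlib

/-!
Let `l` and `m` be admissible in the infima defining `‖u‖` and `‖v‖`. Young's inequality, applied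
pointwise to `|u x| / l` and `|v x| / m`, bounds `|u x * v x|` by `l * m` times the sum of the two
rescaled modular integrands. Each of these integrates to at most `1`, so `∫ |u v| ≤ 2 l m`, and
`l`, `m` can be taken arbitrarily close to the two norms.

For this the modular must be finite at every scale, and when the exponents are bounded it suffices
that it is finite at one: `(a / l) ^ s` is then at most a constant multiple of `a ^ s`.
-/

open MeasureTheory Real

/-- The Luxemburg norm for a variable exponent `p`. -/
noncomputable def luxNorm {Ω : Type*} [MeasurableSpace Ω] (μ : Measure Ω)
    (p u : Ω → ℝ) : ℝ :=
  sInf {l : ℝ | 0 < l ∧ ∫ x, (|u x| / l) ^ (p x) ∂μ ≤ 1}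

lemma abs_mul_le_rpow_div_add_rpow_div {p q l m : ℝ} (hpq : p.HolderConjugate q)
    (hl : 0 < l) (hm : 0 < m) (a b : ℝ) :
    |a * b| ≤ l * m * ((|a| / l) ^ p + (|b| / m) ^ q) := by
  have young : |a| / l * (|b| / m) ≤ (|a| / l) ^ p + (|b| / m) ^ q :=
    calc |a| / l * (|b| / m) ≤ (|a| / l) ^ p / p + (|b| / m) ^ q / q :=
          young_inequality_of_nonneg (by positivity) (by positivity) hpq
      _ ≤ (|a| / l) ^ p + (|b| / m) ^ q :=
          add_le_add (div_le_self (by positivity) hpq.lt.le)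
            (div_le_self (by positivity) hpq.symm.lt.le)
  calc |a * b| = l * m * (|a| / l * (|b| / m)) := by rw [abs_mul]; field_simp
    _ ≤ l * m * ((|a| / l) ^ p + (|b| / m) ^ q) := by gcongr

lemma div_sub_one_le_div_sub_one {a b : ℝ} (ha : 1 < a) (hab : a ≤ b) :
    b / (b - 1) ≤ a / (a - 1) := by
  rw [div_le_div_iff₀ (by linarith) (by linarith)]
  linarith

lemma div_rpow_le_max_rpow_mul {a l s S : ℝ} (ha : 0 ≤ a) (hl : 0 < l) (hs : 0 ≤ s)
    (hsS : s ≤ S) : (a / l) ^ s ≤ max 1 l⁻¹ ^ S * a ^ s := by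
  have hpow : l⁻¹ ^ s ≤ max 1 l⁻¹ ^ S :=
    calc l⁻¹ ^ s ≤ max 1 l⁻¹ ^ s := rpow_le_rpow (by positivity) (le_max_right _ _) hs
      _ ≤ max 1 l⁻¹ ^ S := rpow_le_rpow_of_exponent_le (le_max_left _ _) hsS
  rw [div_eq_inv_mul, mul_rpow (by positivity) ha]
  gcongr

lemma div_rpow_le_rpow_div {a l s : ℝ} (ha : 0 ≤ a) (hl : 1 ≤ l) (hs : 1 ≤ s) :
    (a / l) ^ s ≤ a ^ s / l := by
  rw [div_rpow ha (by positivity)]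
  gcongr
  exact self_le_rpow_of_one_le hl hs

section Luxemburg

variable {Ω : Type*} [MeasurableSpace Ω] {μ : Measure Ω} {p q u v : Ω → ℝ}

-- Rules out the junk value `sInf ∅ = 0` in `luxNorm`.
lemma exists_pos_integral_div_rpow_le_one (hp : ∀ᵐ x ∂μ, 1 ≤ p x)
    (hu : Integrable (fun x => |u x| ^ p x) μ) :
    ∃ l, 0 < l ∧ ∫ x, (|u x| / l) ^ p x ∂μ ≤ 1 := by
  set l : ℝ := max 1 (∫ x, |u x| ^ p x ∂μ)
  have hl : 1 ≤ l := le_max_left _ _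
  have hl0 : 0 < l := one_pos.trans_le hl
  refine ⟨l, hl0, ?_⟩
  calc ∫ x, (|u x| / l) ^ p x ∂μ ≤ ∫ x, |u x| ^ p x / l ∂μ :=
        integral_mono_of_nonneg (.of_forall fun x => by positivity) (hu.div_const l)
          (hp.mono fun x hx => div_rpow_le_rpow_div (abs_nonneg _) hl hx)
    _ = (∫ x, |u x| ^ p x ∂μ) / l := integral_div _ _
    _ ≤ 1 := (div_le_one hl0).2 (le_max_right _ _)

lemma exists_integral_div_rpow_le_one_of_luxNorm_lt {r : ℝ} (hp : ∀ᵐ x ∂μ, 1 ≤ p x)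
    (hu : Integrable (fun x => |u x| ^ p x) μ) (hr : luxNorm μ p u < r) :
    ∃ l, 0 < l ∧ l < r ∧ ∫ x, (|u x| / l) ^ p x ∂μ ≤ 1 := by
  obtain ⟨l, ⟨hl, hul⟩, hlr⟩ := exists_lt_of_csInf_lt (exists_pos_integral_div_rpow_le_one hp hu) hr
  exact ⟨l, hl, hlr, hul⟩

lemma integrable_mul_of_integrable_div_rpow {l m : ℝ} (hl : 0 < l) (hm : 0 < m)
    (hpq : ∀ᵐ x ∂μ, (p x).HolderConjugate (q x))
    (huv : AEStronglyMeasurable (fun x => u x * v x) μ)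
    (hu : Integrable (fun x => (|u x| / l) ^ p x) μ)
    (hv : Integrable (fun x => (|v x| / m) ^ q x) μ) :
    Integrable (fun x => u x * v x) μ :=
  ((hu.add hv).const_mul (l * m)).mono' huv <|
    hpq.mono fun x hx => abs_mul_le_rpow_div_add_rpow_div hx hl hm (u x) (v x)

lemma integral_abs_mul_le_integral_div_rpow_add {l m : ℝ} (hl : 0 < l) (hm : 0 < m)
    (hpq : ∀ᵐ x ∂μ, (p x).HolderConjugate (q x))
    (hu : Integrable (fun x => (|u x| / l) ^ p x) μ)
    (hv : Integrable (fun x => (|v x| / m) ^ q x) μ) :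
    ∫ x, |u x * v x| ∂μ ≤
      l * m * (∫ x, (|u x| / l) ^ p x ∂μ + ∫ x, (|v x| / m) ^ q x ∂μ) := by
  rw [← integral_add hu hv, ← integral_const_mul]
  exact integral_mono_of_nonneg (.of_forall fun x => abs_nonneg _)
    ((hu.add hv).const_mul (l * m))
    (hpq.mono fun x hx => abs_mul_le_rpow_div_add_rpow_div hx hl hm (u x) (v x))

/-- The heart of the variable exponent Lebesgue space (the "finite elements" of a Musielak–Orlicz
space): the functions all of whose positive multiples have finite modular. For such functions every
Bochner integral in `luxNorm` is the true modular, never the default value `0` of a divergent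
integral. -/
def MemLuxHeart (μ : Measure Ω) (p u : Ω → ℝ) : Prop :=
  ∀ l : ℝ, 0 < l → Integrable (fun x => (|u x| / l) ^ p x) μ

namespace MemLuxHeart

lemma of_integrable {P : ℝ} (hpm : AEMeasurable p μ) (hum : AEMeasurable u μ)
    (hp0 : ∀ᵐ x ∂μ, 0 ≤ p x) (hpP : ∀ᵐ x ∂μ, p x ≤ P)
    (hu : Integrable (fun x => |u x| ^ p x) μ) : MemLuxHeart μ p u := by
  intro l hl
  refine (hu.const_mul (max 1 l⁻¹ ^ P)).mono'
    ((hum.abs.div_const l).pow hpm).aestronglyMeasurable ?_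
  filter_upwards [hp0, hpP] with x hx0 hxP
  rw [norm_of_nonneg (by positivity)]
  exact div_rpow_le_max_rpow_mul (abs_nonneg _) hl hx0 hxP

lemma of_integrable_conjExponent {a : ℝ} (hpm : AEMeasurable p μ) (hum : AEMeasurable u μ)
    (ha : 1 < a) (hap : ∀ᵐ x ∂μ, a ≤ p x)
    (hu : Integrable (fun x => |u x| ^ (p x / (p x - 1))) μ) :
    MemLuxHeart μ (fun x => p x / (p x - 1)) u :=
  of_integrable (hpm.div (hpm.sub_const 1)) hum
    (hap.mono fun _ hx => (HolderConjugate.conjExponent (ha.trans_le hx)).symm.nonneg)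
    (hap.mono fun _ hx => div_sub_one_le_div_sub_one ha hx) hu

lemma integrable_abs_rpow (hu : MemLuxHeart μ p u) : Integrable (fun x => |u x| ^ p x) μ := by
  simpa only [div_one] using hu 1 one_pos

lemma integral_abs_mul_le (hpq : ∀ᵐ x ∂μ, (p x).HolderConjugate (q x))
    (hu : MemLuxHeart μ p u) (hv : MemLuxHeart μ q v) :
    ∫ x, |u x * v x| ∂μ ≤ 2 * luxNorm μ p u * luxNorm μ q v := by
  suffices h : (∫ x, |u x * v x| ∂μ) / 2 ≤ luxNorm μ p u * luxNorm μ q v by linarith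
  refine le_mul_of_forall_lt₀ fun r hr s hs => ?_
  obtain ⟨l, hl, hlr, hul⟩ := exists_integral_div_rpow_le_one_of_luxNorm_lt
    (hpq.mono fun x hx => hx.lt.le) hu.integrable_abs_rpow hr
  obtain ⟨m, hm, hms, hvm⟩ := exists_integral_div_rpow_le_one_of_luxNorm_lt
    (hpq.mono fun x hx => hx.symm.lt.le) hv.integrable_abs_rpow hs
  calc (∫ x, |u x * v x| ∂μ) / 2
      ≤ l * m * (∫ x, (|u x| / l) ^ p x ∂μ + ∫ x, (|v x| / m) ^ q x ∂μ) / 2 := by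
        gcongr
        exact integral_abs_mul_le_integral_div_rpow_add hl hm hpq (hu l hl) (hv m hm)
    _ ≤ l * m * (1 + 1) / 2 := by gcongr
    _ = l * m := by ring
    _ ≤ r * s := mul_le_mul hlr.le hms.le hm.le (hl.trans hlr).le

end MemLuxHeart

theorem luxNorm_holder_general (hpq : ∀ᵐ x ∂μ, (p x).HolderConjugate (q x))
    (huv : AEStronglyMeasurable (fun x => u x * v x) μ)
    (hu : MemLuxHeart μ p u) (hv : MemLuxHeart μ q v) :
    Integrable (fun x => u x * v x) μ ∧
    |∫ x, u x * v x ∂μ| ≤ 2 * luxNorm μ p u * luxNorm μ q v :=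
  ⟨integrable_mul_of_integrable_div_rpow one_pos one_pos hpq huv (hu 1 one_pos) (hv 1 one_pos),
    abs_integral_le_integral_abs.trans (hu.integral_abs_mul_le hpq hv)⟩

end Luxemburg

/-- Hölder's inequality in variable exponent Lebesgue spaces: if `1 < p⁻ ≤ p(x) ≤ p⁺ < ∞`,
`p'(x) = p(x)/(p(x)-1)`, `∫ |u|^{p(x)} < ∞` and `∫ |v|^{p'(x)} < ∞`, then `u·v` is
integrable and `|∫ u v| ≤ 2 ‖u‖_{p(·)} ‖v‖_{p'(·)}`. -/
theorem luxNorm_holder {Ω : Type*} [MeasurableSpace Ω] (μ : Measure Ω)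
    (p u v : Ω → ℝ) (pm pp : ℝ)
    (hp : Measurable p) (hu : Measurable u) (hv : Measurable v)
    (hpm : 1 < pm) (hbd : ∀ x, pm ≤ p x ∧ p x ≤ pp)
    (hfinu : Integrable (fun x => |u x| ^ (p x)) μ)
    (hfinv : Integrable (fun x => |v x| ^ (p x / (p x - 1))) μ) :
    Integrable (fun x => u x * v x) μ ∧
    |∫ x, u x * v x ∂μ| ≤
      2 * luxNorm μ p u * luxNorm μ (fun x => p x / (p x - 1)) v := by
  have hp1 : ∀ x, 1 < p x := fun x => hpm.trans_le (hbd x).1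
  exact luxNorm_holder_general (.of_forall fun x => .conjExponent (hp1 x))
    (hu.mul hv).aestronglyMeasurable
    (.of_integrable hp.aemeasurable hu.aemeasurable
      (.of_forall fun x => (one_pos.trans (hp1 x)).le) (.of_forall fun x => (hbd x).2) hfinu)
    (.of_integrable_conjExponent hp.aemeasurable hv.aemeasurable hpm
      (.of_forall fun x => (hbd x).1) hfinv)
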